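/- There exist absolute constants C and c such that for every caching instance with cache size k ≥ 10, the AlternatingOracle strategy B satisfies E[OBJ_B] ≤ C·(OPT + √(η·OPT / k)) + c, where the expectation is over the internal random choices of the algorithm. In particular, AlternatingOracle is O(√((1/k)·(η/OPT)))-competitive. -/

import Mathlib

namespace Caching

attribute [local instance low] Classical.propDecidable

/-- A run of a feasible eviction strategy on the request sequence `σ` with cache size `k`
and time horizon `T`.  `C t` is the cache after processing request `t` (with `C 0 = ∅`),
and `p t` is the page evicted at time `t` (meaningful at full-cache misses). -/
structure CacheRun (S : Type) [DecidableEq S] (k T : ℕ) (σ : ℕ → S) where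
  C : ℕ → Finset S
  p : ℕ → S
  init : C 0 = ∅
  card_le : ∀ t, (C t).card ≤ k
  hit : ∀ t, 1 ≤ t → t ≤ T → (σ t ∈ C (t - 1) ∨ (C (t - 1)).card < k) →
      C t = insert (σ t) (C (t - 1))
  evict_mem : ∀ t, 1 ≤ t → t ≤ T → σ t ∉ C (t - 1) → (C (t - 1)).card = k →
      p t ∈ C (t - 1)
  evict : ∀ t, 1 ≤ t → t ≤ T → σ t ∉ C (t - 1) → (C (t - 1)).card = k →
      C t = insert (σ t) ((C (t - 1)).erase (p t))

variable {S : Type} [DecidableEq S]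

/- `nextReq σ T t` is `ν(t)`: the first time `s > t` (with `s ≤ T`) at which the page
`σ t` is requested again, and `T + 1` if there is no such time. -/
open Classical in
noncomputable def nextReq (σ : ℕ → S) (T t : ℕ) : ℕ :=
  if h : ∃ s, t < s ∧ s ≤ T ∧ σ s = σ t then Nat.find h else T + 1

/-- The total prediction loss `η = Σ_{t=1}^T |ν(t) - ω(t)|`. -/
noncomputable def totalLoss (σ : ℕ → S) (T : ℕ) (ω : ℕ → ℕ) : ℕ :=
  ∑ t ∈ Finset.Icc 1 T, Nat.dist (nextReq σ T t) (ω t)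

/-- `I_Q(t)`: indices of the last requests (up to time `t`) of the currently cached pages. -/
noncomputable def lastIdx {k T : ℕ} {σ : ℕ → S} (R : CacheRun S k T σ) (t : ℕ) : Finset ℕ :=
  (Finset.Icc 1 t).filter fun i => σ i ∈ R.C t ∧ ∀ j ∈ Finset.Icc (i + 1) t, σ j ≠ σ i

/-- Time `t` is a full-cache miss (an eviction step). -/
def EvictStep {k T : ℕ} {σ : ℕ → S} (R : CacheRun S k T σ) (t : ℕ) : Prop :=
  1 ≤ t ∧ t ≤ T ∧ σ t ∉ R.C (t - 1) ∧ (R.C (t - 1)).card = k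

/-- At time `t` the run evicts the page whose last-request index is `i`. -/
def EvictsIdx {k T : ℕ} {σ : ℕ → S} (R : CacheRun S k T σ) (t i : ℕ) : Prop :=
  EvictStep R t ∧ i ∈ lastIdx R (t - 1) ∧ R.p t = σ i

/-- `OBJ_Q`: the number of cache misses of the run. -/
noncomputable def misses {k T : ℕ} {σ : ℕ → S} (R : CacheRun S k T σ) : ℕ :=
  ((Finset.Icc 1 T).filter fun t => σ t ∉ R.C (t - 1)).card

/-- Belady's algorithm: on a full-cache miss always evict the cached page with the
largest next-request time. -/
def IsBelady {k T : ℕ} {σ : ℕ → S} (A : CacheRun S k T σ) : Prop :=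
  ∀ t, EvictStep A t → ∀ i ∈ lastIdx A (t - 1), A.p t = σ i →
    ∀ j ∈ lastIdx A (t - 1), nextReq σ T j ≤ nextReq σ T i

/-- BlindOracle: on a full-cache miss always evict the cached page with the largest
predicted next-request time. -/
def IsBlindOracle {k T : ℕ} {σ : ℕ → S} (B : CacheRun S k T σ) (ω : ℕ → ℕ) : Prop :=
  ∀ t, EvictStep B t → ∀ i ∈ lastIdx B (t - 1), B.p t = σ i →
    ∀ j ∈ lastIdx B (t - 1), ω j ≤ ω i

/-- An eviction graph of a run: a directed graph on `{1,…,T}` whose every edge `(i, j)`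
corresponds to a distinct time (`time e`) at which the run made a mistake by evicting
page `σ j` while `i` was a strictly better eviction candidate in the cache. -/
structure EvictionGraph {k T : ℕ} {σ : ℕ → S} (R : CacheRun S k T σ) where
  E : Finset (ℕ × ℕ)
  time : ℕ × ℕ → ℕ
  time_inj : ∀ e ∈ E, ∀ e' ∈ E, time e = time e' → e = e'
  mistake : ∀ e ∈ E, EvictsIdx R (time e) e.2 ∧ e.1 ∈ lastIdx R (time e - 1) ∧
      nextReq σ T e.2 < nextReq σ T e.1

/-- The eviction at time `t` triggers the eviction at time `t'`: the page evicted
at `t` is next requested at `t' = ν(i)`, which is again an eviction step. -/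
def Triggers {k T : ℕ} {σ : ℕ → S} (R : CacheRun S k T σ) (t t' : ℕ) : Prop :=
  ∃ i, EvictsIdx R t i ∧ t' = nextReq σ T i ∧ ∃ j, EvictsIdx R t' j

/-- The eviction of the page with last-request index `i` triggers the eviction of the
page with last-request index `j` (at time `ν(i)`). -/
def TriggersIdx {k T : ℕ} {σ : ℕ → S} (R : CacheRun S k T σ) (i j : ℕ) : Prop :=
  (∃ t, EvictsIdx R t i) ∧ EvictsIdx R (nextReq σ T i) j

/-- The page requested at time `t` was never requested before. -/
def NewPage (σ : ℕ → S) (t : ℕ) : Prop := ∀ s, 1 ≤ s → s < t → σ s ≠ σ t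

/-- At time `t` the evicted page has the largest prediction among cached pages. -/
def BlindChoiceAt {k T : ℕ} {σ : ℕ → S} (R : CacheRun S k T σ) (ω : ℕ → ℕ) (t : ℕ) : Prop :=
  ∀ i ∈ lastIdx R (t - 1), R.p t = σ i → ∀ j ∈ lastIdx R (t - 1), ω j ≤ ω i

/-- Corrector's choice at time `t`: if some cached page has a provably wrong prediction
(`ω i < t`), evict such a page with minimal prediction; otherwise act as BlindOracle. -/
def CorrectorChoiceAt {k T : ℕ} {σ : ℕ → S} (R : CacheRun S k T σ) (ω : ℕ → ℕ) (t : ℕ) :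
    Prop :=
  ((∃ i ∈ lastIdx R (t - 1), ω i < t) →
    ∀ i ∈ lastIdx R (t - 1), R.p t = σ i →
      ω i < t ∧ ∀ j ∈ lastIdx R (t - 1), ω j < t → ω i ≤ ω j) ∧
  ((¬ ∃ i ∈ lastIdx R (t - 1), ω i < t) → BlindChoiceAt R ω t)

/-- The page requested at time `t` was last evicted (before `t`) at a step labeled with
strategy `s₀` (0 = BlindOracle, 1 = RandomAlg, 2 = Corrector). -/
def LastEvictedWith {k T : ℕ} {σ : ℕ → S} (R : CacheRun S k T σ) (strat : ℕ → Fin 3)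
    (t : ℕ) (s₀ : Fin 3) : Prop :=
  ∃ t₀, t₀ < t ∧ EvictStep R t₀ ∧ R.p t₀ = σ t ∧ strat t₀ = s₀ ∧
    ∀ t₁, t₀ < t₁ → t₁ < t → ¬(EvictStep R t₁ ∧ R.p t₁ = σ t)

/-- A run of the AlternatingOracle strategy (for a fixed realization of its random
choices), together with the labeling `strat` of which of the three strategies was used
at each eviction step: on a miss for a never-requested page use BlindOracle; if the
requested page was last evicted by BlindOracle use RandomAlg (an arbitrary cached page);
if by RandomAlg use Corrector; if by Corrector use BlindOracle. -/
def IsAlternatingOracle {k T : ℕ} {σ : ℕ → S} (R : CacheRun S k T σ) (ω : ℕ → ℕ)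
    (strat : ℕ → Fin 3) : Prop :=
  ∀ t, EvictStep R t →
    (NewPage σ t → strat t = 0 ∧ BlindChoiceAt R ω t) ∧
    (LastEvictedWith R strat t 0 → strat t = 1) ∧
    (LastEvictedWith R strat t 1 → strat t = 2 ∧ CorrectorChoiceAt R ω t) ∧
    (LastEvictedWith R strat t 2 → strat t = 0 ∧ BlindChoiceAt R ω t)

/-- AlternatingOracle driven by a seed `u` of uniform random values: at each eviction
step performed by RandomAlg at time `t`, the evicted page is the one whose last-request
index has rank `u t` among the `k` cached indices, so that for a uniformly random seed
the evicted page is uniform over the cache. -/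
def IsAlternatingOracleSeeded {k T : ℕ} {σ : ℕ → S} (R : CacheRun S k T σ) (ω : ℕ → ℕ)
    (strat : ℕ → Fin 3) (u : Fin (T + 1) → Fin k) : Prop :=
  IsAlternatingOracle R ω strat ∧
  ∀ t (h : EvictStep R t), strat t = 1 →
    ∀ i ∈ lastIdx R (t - 1), R.p t = σ i →
      ((lastIdx R (t - 1)).filter fun j => j < i).card =
        ((u ⟨t, Nat.lt_succ_of_le h.2.1⟩ : Fin k) : ℕ)

/-- The family of runs is adapted to the seeds: the behavior up to time `t` depends only
on the seed values with index at most `t` (the strategy is online). -/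
def Adapted {k T : ℕ} {σ : ℕ → S} (R : (Fin (T + 1) → Fin k) → CacheRun S k T σ)
    (strat : (Fin (T + 1) → Fin k) → ℕ → Fin 3) : Prop :=
  ∀ u u' t, (∀ s : Fin (T + 1), (s : ℕ) ≤ t → u s = u' s) →
    (R u).C t = (R u').C t ∧ (R u).p t = (R u').p t ∧ strat u t = strat u' t

/-- The probability of the outcome `x` for `T` i.i.d. Bernoulli(γ) random bits. -/
noncomputable def bernWeight (γ : ℝ) {T : ℕ} (x : Fin T → Bool) : ℝ :=
  ∏ i, if x i then γ else 1 - γ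

/-- `S(x, m)`: the number of ones among the first `m` coordinates of `x`. -/
noncomputable def scount {T : ℕ} (x : Fin T → Bool) (m : ℕ) : ℕ :=
  (Finset.univ.filter fun i : Fin T => (i : ℕ) < m ∧ x i).card

/-!
Match the pages that only the comparator `A` caches with the pages that only AlternatingOracle
caches. The weight of a pair `(a, b)` depends on the strategy that last evicted `a` and on the level
of `a`: the number of blocks of `k / 2` time steps, up to a cap, by which the next request of `a`
precedes the predicted next request of `b` plus a tolerance `g * k`. The potential is the least
weight of a matching. A miss of `A` raises it by `O(g)`.

When AlternatingOracle misses a page that `A` has cached, the page it evicts takes over the partner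
of the requested page. It is next requested later, so that its level is not larger. The weights are
such that this lowers the potential, up to predictions that are off by at least `g * k`:
* RandomAlg lowers it on average, since at most half of the `k` cached pages are requested within
  the next `k / 2` steps, so that the level drops with probability at least one half.
* Corrector can only fail at level `0`. Then the prediction of the partner lies at least `g * k` in
  the past, and so does that of the evicted page.
* BlindOracle can only fail if the evicted page has the largest possible level. Its prediction is at
  least that of the partner, so that this takes an error of at least `g * k`.

Different evictions have different last request indices, so that at most `η / (g * k)` evictions
are of pages with such a bad prediction. The expected number of misses is therefore
`O(g * OPT + η / (g * k))`, and `g ≈ √(η / (k * OPT))` balances the two terms.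
-/

/-! ### Matchings between two caches -/

section Transport

variable {α : Type*} [DecidableEq α] {A Q : Finset α} {P : Multiset (α × α)}
  {w w' : α → α → ℕ} {b e x y z : α}

/-- A perfect matching between `A \ Q` and `Q \ A`, as the multiset of its pairs. Both projections
of the multiset are duplicate-free because they are the values of finsets. -/
def IsMatching (A Q : Finset α) (P : Multiset (α × α)) : Prop :=
  P.map Prod.fst = (A \ Q).val ∧ P.map Prod.snd = (Q \ A).val

/-- The total weight of the pairs of a matching. -/
def matchingCost (w : α → α → ℕ) (P : Multiset (α × α)) : ℕ :=
  (P.map fun p => w p.1 p.2).sum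

/-- The least cost of a perfect matching between `A \ Q` and `Q \ A`. It measures how far the cache
`Q` of an algorithm is from the cache `A` of a comparator, and has the junk value `0` when the two
sets have different sizes. -/
noncomputable def transportCost (w : α → α → ℕ) (A Q : Finset α) : ℕ :=
  sInf (matchingCost w '' {P | IsMatching A Q P})

omit [DecidableEq α] in
lemma matchingCost_cons (w : α → α → ℕ) (a b : α) (P : Multiset (α × α)) :
    matchingCost w ((a, b) ::ₘ P) = w a b + matchingCost w P := by
  simp [matchingCost]

omit [DecidableEq α] in
lemma matchingCost_congr (h : ∀ p ∈ P, w p.1 p.2 = w' p.1 p.2) :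
    matchingCost w P = matchingCost w' P :=
  congrArg Multiset.sum (Multiset.map_congr rfl h)

omit [DecidableEq α] in
lemma matchingCost_map_swap (w : α → α → ℕ) (P : Multiset (α × α)) :
    matchingCost w (P.map Prod.swap) = matchingCost (flip w) P :=
  congrArg Multiset.sum (Multiset.map_map _ _ _)

lemma eq_val_erase_of_cons_eq_val {M : Multiset α} (h : x ::ₘ M = A.val) :
    M = (A.erase x).val := by
  rw [Finset.erase_val, ← h, Multiset.erase_cons_head]

namespace IsMatching

lemma fst_mem (h : IsMatching A Q P) {p : α × α} (hp : p ∈ P) : p.1 ∈ A \ Q := by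
  rw [← Finset.mem_val, ← h.1]
  exact Multiset.mem_map_of_mem _ hp

lemma snd_mem (h : IsMatching A Q P) {p : α × α} (hp : p ∈ P) : p.2 ∈ Q \ A := by
  rw [← Finset.mem_val, ← h.2]
  exact Multiset.mem_map_of_mem _ hp

protected lemma swap (h : IsMatching A Q P) : IsMatching Q A (P.map Prod.swap) :=
  ⟨(Multiset.map_map _ _ _).trans h.2, (Multiset.map_map _ _ _).trans h.1⟩

lemma exists_cons_of_fst (h : IsMatching A Q P) (hx : x ∈ A \ Q) :
    ∃ e P₀, P = (x, e) ::ₘ P₀ := by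
  rw [← Finset.mem_val, ← h.1] at hx
  obtain ⟨⟨_, e⟩, hp, rfl⟩ := Multiset.mem_map.1 hx
  exact ⟨e, Multiset.exists_cons_of_mem hp⟩

lemma exists_cons_of_snd (h : IsMatching A Q P) (hy : y ∈ Q \ A) :
    ∃ a P₀, P = (a, y) ::ₘ P₀ := by
  rw [← Finset.mem_val, ← h.2] at hy
  obtain ⟨⟨a, _⟩, hp, rfl⟩ := Multiset.mem_map.1 hy
  exact ⟨a, Multiset.exists_cons_of_mem hp⟩

lemma resolve_pair (h : IsMatching A Q ((x, e) ::ₘ P)) :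
    IsMatching A (insert x (Q.erase e)) P := by
  have hx := Finset.mem_sdiff.1 (h.fst_mem (Multiset.mem_cons_self _ _))
  have he := Finset.mem_sdiff.1 (h.snd_mem (Multiset.mem_cons_self _ _))
  simp only [IsMatching, Multiset.map_cons] at h
  refine ⟨(eq_val_erase_of_cons_eq_val h.1).trans (congrArg Finset.val ?_),
    (eq_val_erase_of_cons_eq_val h.2).trans (congrArg Finset.val ?_)⟩ <;>
  · ext a
    simp only [Finset.mem_erase, Finset.mem_sdiff, Finset.mem_insert]
    grind

lemma cons_of_mem_inter (h : IsMatching A Q P) (hbA : b ∉ A) (hbQ : b ∉ Q) (hyA : y ∈ A)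
    (hyQ : y ∈ Q) : IsMatching A (insert b (Q.erase y)) ((y, b) ::ₘ P) := by
  simp only [IsMatching, Multiset.map_cons, h.1, h.2]
  rw [← Finset.insert_val_of_notMem (by simp [hyQ]), ← Finset.insert_val_of_notMem (by simp [hbQ])]
  constructor <;>
  · congr 1
    ext a
    simp only [Finset.mem_erase, Finset.mem_sdiff, Finset.mem_insert]
    grind

lemma rename_snd (h : IsMatching A Q ((x, y) ::ₘ P)) (hbA : b ∉ A) (hbQ : b ∉ Q) :
    IsMatching A (insert b (Q.erase y)) ((x, b) ::ₘ P) := by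
  have hy := Finset.mem_sdiff.1 (h.snd_mem (Multiset.mem_cons_self _ _))
  simp only [IsMatching, Multiset.map_cons] at h ⊢
  rw [h.1, eq_val_erase_of_cons_eq_val h.2, ← Finset.insert_val_of_notMem (by simp [hbQ])]
  constructor <;>
  · congr 1
    ext a
    simp only [Finset.mem_erase, Finset.mem_sdiff, Finset.mem_insert]
    grind

lemma exists_replace (hw : ∀ a b c, w a c ≤ w a b + w b c) (h : IsMatching A Q P) (hbA : b ∉ A)
    (hbQ : b ∉ Q) (hy : y ∈ Q) :
    ∃ P', IsMatching A (insert b (Q.erase y)) P' ∧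
      matchingCost w P' ≤ matchingCost w P + w y b := by
  by_cases hyA : y ∈ A
  · exact ⟨_, h.cons_of_mem_inter hbA hbQ hyA hy, by rw [matchingCost_cons, add_comm]⟩
  · obtain ⟨a, P, rfl⟩ := h.exists_cons_of_snd (Finset.mem_sdiff.2 ⟨hy, hyA⟩)
    refine ⟨_, h.rename_snd hbA hbQ, ?_⟩
    rw [matchingCost_cons, matchingCost_cons]
    linarith [hw a y b]

lemma fst_ne (h : IsMatching A Q ((x, e) ::ₘ P)) {p : α × α} (hp : p ∈ P) : p.1 ≠ x := by
  have hnodup : (((x, e) ::ₘ P).map Prod.fst).Nodup := h.1 ▸ (A \ Q).nodup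
  rw [Multiset.map_cons, Multiset.nodup_cons] at hnodup
  exact ne_of_mem_of_not_mem (Multiset.mem_map_of_mem Prod.fst hp) hnodup.1

end IsMatching

lemma exists_isMatching (h : A.card = Q.card) : ∃ P, IsMatching A Q P := by
  have hc : (A \ Q).card = (Q \ A).card := Finset.card_sdiff_comm h
  refine ⟨((A \ Q).toList.zip (Q \ A).toList : List (α × α)), ?_, ?_⟩
  · rw [Multiset.map_coe, List.map_fst_zip (by simp [hc]), Finset.coe_toList]
  · rw [Multiset.map_coe, List.map_snd_zip (by simp [hc]), Finset.coe_toList]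

lemma transportCost_le (h : IsMatching A Q P) : transportCost w A Q ≤ matchingCost w P :=
  Nat.sInf_le ⟨P, h, rfl⟩

lemma exists_matchingCost_eq_transportCost (w : α → α → ℕ) (h : A.card = Q.card) :
    ∃ P, IsMatching A Q P ∧ matchingCost w P = transportCost w A Q :=
  Nat.sInf_mem (Set.Nonempty.image _ (exists_isMatching h))

@[simp]
lemma transportCost_self (w : α → α → ℕ) (A : Finset α) : transportCost w A A = 0 :=
  Nat.le_zero.1 (transportCost_le (P := 0) (by simp [IsMatching]))

lemma transportCost_congr (h : ∀ a ∈ A \ Q, ∀ b ∈ Q \ A, w a b = w' a b) :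
    transportCost w A Q = transportCost w' A Q :=
  congrArg sInf (Set.image_congr fun _ hP =>
    matchingCost_congr fun _ hp => h _ (hP.fst_mem hp) _ (hP.snd_mem hp))

lemma transportCost_flip_le (w : α → α → ℕ) (h : A.card = Q.card) :
    transportCost (flip w) Q A ≤ transportCost w A Q := by
  obtain ⟨P, hP, hcost⟩ := exists_matchingCost_eq_transportCost w h
  rw [← hcost]
  exact (transportCost_le hP.swap).trans_eq (matchingCost_map_swap _ _)

lemma transportCost_insert_erase_le (hw : ∀ a b c, w a c ≤ w a b + w b c) (h : A.card = Q.card)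
    (hbA : b ∉ A) (hbQ : b ∉ Q) (hy : y ∈ Q) :
    transportCost w A (insert b (Q.erase y)) ≤ transportCost w A Q + w y b := by
  obtain ⟨P, hP, hcost⟩ := exists_matchingCost_eq_transportCost w h
  obtain ⟨P', hP', hle⟩ := hP.exists_replace hw hbA hbQ hy
  exact (transportCost_le hP').trans (hcost ▸ hle)

/-
The partner `e` is the page matched with `x`. Once `x` enters `Q` in place of `e` that pair
disappears, and then `e` re-enters in place of `y`.
-/
lemma exists_partner (w : α → α → ℕ) (h : A.card = Q.card) (hx : x ∈ A \ Q) :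
    ∃ e ∈ Q \ A, ∀ w' : α → α → ℕ, (∀ a b c, w' a c ≤ w' a b + w' b c) →
      (∀ a ∈ A \ Q, a ≠ x → ∀ b ∈ Q \ A, w' a b = w a b) → ∀ y ∈ Q,
      transportCost w' A (insert x (Q.erase y)) + w x e ≤ transportCost w A Q + w' y e := by
  obtain ⟨P, hP, hcost⟩ := exists_matchingCost_eq_transportCost w h
  obtain ⟨e, P, rfl⟩ := hP.exists_cons_of_fst hx
  have he : e ∈ Q \ A := hP.snd_mem (Multiset.mem_cons_self _ _)
  refine ⟨e, he, fun w' hw' hww' y hy => ?_⟩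
  have hrest : matchingCost w' P = matchingCost w P := matchingCost_congr fun p hp =>
    hww' _ (hP.fst_mem (Multiset.mem_cons_of_mem hp)) (hP.fst_ne hp) _
      (hP.snd_mem (Multiset.mem_cons_of_mem hp))
  rw [matchingCost_cons] at hcost
  simp only [Finset.mem_sdiff] at hx he
  obtain rfl | hye := eq_or_ne y e
  · have := transportCost_le (w := w') hP.resolve_pair
    omega
  · have hset : insert e ((insert x (Q.erase e)).erase y) = insert x (Q.erase y) := by
      ext a
      simp only [Finset.mem_erase, Finset.mem_insert]
      grind
    obtain ⟨P', hP', hle⟩ := hP.resolve_pair.exists_replace (b := e) (y := y) hw' he.2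
      (by grind) (by grind)
    have := transportCost_le (w := w') (hset ▸ hP')
    omega

lemma transportCost_insert_erase_left_le {F : ℕ} (hw : ∀ a b, F ≤ w a b)
    (hw' : ∀ a b, F ≤ w' a b ∧ w' a b ≤ 2 * F) (h : A.card = Q.card) (hx : x ∈ Q \ A)
    (hz : z ∈ A) (hww' : ∀ a ∈ A \ Q, ∀ b ∈ Q \ A, b ≠ x → w' a b = w a b) :
    transportCost w' (insert x (A.erase z)) Q ≤ transportCost w A Q + F := by
  obtain ⟨e, -, hpartner⟩ := exists_partner (flip w) h.symm hx
  have hmove : transportCost (flip w') Q (insert x (A.erase z)) + w e x ≤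
      transportCost (flip w) Q A + w' e z :=
    hpartner (flip w') (fun a b c => by grind [flip])
      (fun b hb hbx a ha => hww' a ha b hb hbx) z hz
  have hcard : (insert x (A.erase z)).card = Q.card := by
    rw [Finset.card_insert_of_notMem (by grind), Finset.card_erase_add_one hz, h]
  have hflip' : transportCost w' (insert x (A.erase z)) Q ≤
      transportCost (flip w') Q (insert x (A.erase z)) :=
    transportCost_flip_le (flip w') hcard.symm
  have hflip := transportCost_flip_le w h
  have := hw e x
  have := (hw' e z).2
  omega

end Transport

/-! ### Runs of eviction strategies -/

section LastRequest

variable {α : Type*} [DecidableEq α] {σ : ℕ → α} {T t i j : ℕ} {s : α}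

/-- The page `s` is requested at one of the times `1, …, t`. -/
def WasRequested (σ : ℕ → α) (t : ℕ) (s : α) : Prop :=
  ∃ i, 1 ≤ i ∧ i ≤ t ∧ σ i = s

/-- The time of the last request of the page `s` up to time `t`, with junk values for pages that
are not requested by then. -/
def lastReq (σ : ℕ → α) (t : ℕ) (s : α) : ℕ :=
  Nat.findGreatest (fun i => σ i = s) t

omit [DecidableEq α] in
lemma WasRequested.succ (h : WasRequested σ t s) : WasRequested σ (t + 1) s :=
  let ⟨i, h1, hi, hs⟩ := h
  ⟨i, h1, Nat.le_succ_of_le hi, hs⟩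

omit [DecidableEq α] in
lemma WasRequested.of_succ (h : WasRequested σ (t + 1) s) (hs : σ (t + 1) ≠ s) :
    WasRequested σ t s := by
  obtain ⟨i, h1, hi, rfl⟩ := h
  exact ⟨i, h1, Nat.le_of_lt_succ (hi.lt_of_ne fun hit => hs (hit ▸ rfl)), rfl⟩

lemma lastReq_le (σ : ℕ → α) (t : ℕ) (s : α) : lastReq σ t s ≤ t :=
  Nat.findGreatest_le t

lemma WasRequested.one_le_lastReq (h : WasRequested σ t s) : 1 ≤ lastReq σ t s :=
  let ⟨_, h1, hi, hs⟩ := h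
  h1.trans (Nat.le_findGreatest hi hs)

lemma WasRequested.apply_lastReq (h : WasRequested σ t s) : σ (lastReq σ t s) = s :=
  let ⟨_, _, hi, hs⟩ := h
  Nat.findGreatest_spec (P := fun i => σ i = s) hi hs

lemma ne_of_lastReq_lt (h : lastReq σ t s < j) (hj : j ≤ t) : σ j ≠ s :=
  Nat.findGreatest_is_greatest h hj

lemma lastReq_succ_of_ne (h : σ (t + 1) ≠ s) : lastReq σ (t + 1) s = lastReq σ t s :=
  Nat.findGreatest_of_not h

end LastRequest

section NextRequest

variable {σ : ℕ → S} {T t i j : ℕ} {s : S}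

lemma lt_nextReq_of_le (h : nextReq σ T i ≤ T) : i < nextReq σ T i := by
  unfold nextReq at h ⊢
  split_ifs at h ⊢ with hex
  · exact (Nat.find_spec hex).1
  · omega

lemma apply_nextReq_of_le (h : nextReq σ T i ≤ T) : σ (nextReq σ T i) = σ i := by
  unfold nextReq at h ⊢
  split_ifs at h ⊢ with hex
  · exact (Nat.find_spec hex).2.2
  · omega

lemma nextReq_le (hij : i < j) (hj : j ≤ T) (h : σ j = σ i) : nextReq σ T i ≤ j := by
  have hex : ∃ s, i < s ∧ s ≤ T ∧ σ s = σ i := ⟨j, hij, hj, h⟩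
  rw [nextReq, dif_pos hex]
  exact Nat.find_min' hex ⟨hij, hj, h⟩

lemma WasRequested.lt_nextReq_lastReq (h : WasRequested σ t s) (ht : t < T) :
    t < nextReq σ T (lastReq σ t s) := by
  by_contra! hle
  exact ne_of_lastReq_lt (lt_nextReq_of_le (by omega)) hle
    ((apply_nextReq_of_le (by omega)).trans h.apply_lastReq)

lemma WasRequested.nextReq_lastReq_eq (h : WasRequested σ t s) (ht : t + 1 ≤ T)
    (hs : σ (t + 1) = s) : nextReq σ T (lastReq σ t s) = t + 1 :=
  (nextReq_le (Nat.lt_succ_of_le (lastReq_le σ t s)) ht (hs.trans h.apply_lastReq.symm)).antisymm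
    (h.lt_nextReq_lastReq ht)

lemma WasRequested.succ_lt_nextReq_lastReq (h : WasRequested σ t s) (ht : t + 1 ≤ T)
    (hs : σ (t + 1) ≠ s) : t + 1 < nextReq σ T (lastReq σ t s) := by
  have hle : t + 1 ≤ nextReq σ T (lastReq σ t s) := h.lt_nextReq_lastReq ht
  refine hle.lt_of_ne fun heq => hs ?_
  have hnext := apply_nextReq_of_le (heq.symm.trans_le ht)
  rw [heq, hnext, h.apply_lastReq]

lemma WasRequested.eq_of_nextReq_lastReq_eq {s' : S} (h : WasRequested σ t s)
    (h' : WasRequested σ t s') (hT : nextReq σ T (lastReq σ t s) ≤ T)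
    (heq : nextReq σ T (lastReq σ t s) = nextReq σ T (lastReq σ t s')) : s = s' := by
  have hs := (apply_nextReq_of_le hT).trans h.apply_lastReq
  have hs' := (apply_nextReq_of_le (heq ▸ hT)).trans h'.apply_lastReq
  rw [← hs, ← hs', heq]

end NextRequest

section Runs

variable {k T t t' : ℕ} {σ : ℕ → S} {A R : CacheRun S k T σ} {s : S}

namespace EvictStep

lemma succ_le (h : EvictStep R (t + 1)) : t + 1 ≤ T := h.2.1

lemma notMem (h : EvictStep R (t + 1)) : σ (t + 1) ∉ R.C t := h.2.2.1

lemma card_eq (h : EvictStep R (t + 1)) : (R.C t).card = k := h.2.2.2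

lemma p_mem (h : EvictStep R (t + 1)) : R.p (t + 1) ∈ R.C t :=
  R.evict_mem _ h.1 h.2.1 h.2.2.1 h.2.2.2

lemma cache_succ (h : EvictStep R (t + 1)) :
    R.C (t + 1) = insert (σ (t + 1)) ((R.C t).erase (R.p (t + 1))) :=
  R.evict _ h.1 h.2.1 h.2.2.1 h.2.2.2

lemma p_ne (h : EvictStep R (t + 1)) : σ (t + 1) ≠ R.p (t + 1) :=
  (ne_of_mem_of_not_mem h.p_mem h.notMem).symm

lemma p_notMem_cache_succ (h : EvictStep R (t + 1)) : R.p (t + 1) ∉ R.C (t + 1) := by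
  simp [h.cache_succ, h.p_ne.symm]

end EvictStep

namespace CacheRun

lemma cache_succ_of_not_evictStep (R : CacheRun S k T σ) (ht : t + 1 ≤ T)
    (h : ¬ EvictStep R (t + 1)) : R.C (t + 1) = insert (σ (t + 1)) (R.C t) := by
  refine R.hit (t + 1) (Nat.le_add_left 1 t) ht ?_
  by_contra! hc
  exact h ⟨Nat.le_add_left 1 t, ht, hc.1, (R.card_le t).antisymm hc.2⟩

lemma cache_succ_of_mem (R : CacheRun S k T σ) (ht : t + 1 ≤ T) (h : σ (t + 1) ∈ R.C t) :
    R.C (t + 1) = R.C t := by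
  rw [R.cache_succ_of_not_evictStep ht fun hE => hE.notMem h, Finset.insert_eq_self.2 h]

lemma cache_succ_subset (R : CacheRun S k T σ) (ht : t + 1 ≤ T) :
    R.C (t + 1) ⊆ insert (σ (t + 1)) (R.C t) := by
  by_cases h : EvictStep R (t + 1)
  · rw [h.cache_succ]
    exact Finset.insert_subset_insert _ (Finset.erase_subset _ _)
  · rw [R.cache_succ_of_not_evictStep ht h]

lemma wasRequested_of_mem (R : CacheRun S k T σ) (ht : t ≤ T) (hs : s ∈ R.C t) :
    WasRequested σ t s := by
  induction t with
  | zero => simp [R.init] at hs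
  | succ t ih =>
    obtain rfl | hs := Finset.mem_insert.1 (R.cache_succ_subset ht hs)
    · exact ⟨t + 1, Nat.le_add_left 1 t, le_rfl, rfl⟩
    · exact (ih (by omega) hs).succ

lemma notMem_of_not_requested (R : CacheRun S k T σ) (htt : t ≤ t') (ht : t' ≤ T)
    (hs : s ∉ R.C t) (hr : ∀ j, t < j → j ≤ t' → σ j ≠ s) : s ∉ R.C t' := by
  induction t', htt using Nat.le_induction with
  | base => exact hs
  | succ m hm ih =>
    refine fun hmem => (Finset.mem_insert.1 (R.cache_succ_subset ht hmem)).elim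
      (fun h => hr _ (by omega) le_rfl h.symm) ?_
    exact ih (by omega) fun j h1 h2 => hr j h1 (by omega)

lemma card_cache_succ (R : CacheRun S k T σ) (ht : t + 1 ≤ T) (hk : (R.C t).card = k) :
    (R.C (t + 1)).card = k := by
  by_cases h : EvictStep R (t + 1)
  · rw [h.cache_succ, Finset.card_insert_of_notMem (by simp [h.notMem]),
      Finset.card_erase_add_one h.p_mem, hk]
  · refine (R.card_le _).antisymm (hk.ge.trans (Finset.card_le_card ?_))
    rw [R.cache_succ_of_not_evictStep ht h]
    exact Finset.subset_insert _ _

lemma cache_succ_eq_of_card_ne (A R : CacheRun S k T σ) (ht : t + 1 ≤ T) (h : A.C t = R.C t)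
    (hk : (A.C t).card ≠ k) : A.C (t + 1) = R.C (t + 1) := by
  rw [A.cache_succ_of_not_evictStep ht fun hE => hk hE.card_eq,
    R.cache_succ_of_not_evictStep ht fun hE => hk (h ▸ hE.card_eq), h]

lemma cache_eq_or_card_eq (A R : CacheRun S k T σ) (ht : t ≤ T) :
    A.C t = R.C t ∨ ((A.C t).card = k ∧ (R.C t).card = k) := by
  induction t with
  | zero => exact .inl (A.init.trans R.init.symm)
  | succ t ih =>
    by_cases hk : (A.C t).card = k ∧ (R.C t).card = k
    · exact .inr ⟨A.card_cache_succ ht hk.1, R.card_cache_succ ht hk.2⟩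
    · have h := (ih (by omega)).resolve_right hk
      exact .inl (A.cache_succ_eq_of_card_ne R ht h fun hA => hk ⟨hA, h ▸ hA⟩)

lemma card_cache_eq_card_cache (A R : CacheRun S k T σ) (ht : t ≤ T) :
    (A.C t).card = (R.C t).card :=
  (A.cache_eq_or_card_eq R ht).elim (congrArg _) fun h => h.1.trans h.2.symm

lemma evictStep_of_mem_of_notMem (A R : CacheRun S k T σ) (ht : t + 1 ≤ T)
    (hA : σ (t + 1) ∈ A.C t) (hR : σ (t + 1) ∉ R.C t) : EvictStep R (t + 1) := by
  refine ⟨Nat.le_add_left 1 t, ht, hR, ?_⟩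
  exact ((A.cache_eq_or_card_eq R (by omega)).resolve_left fun h => hR (h ▸ hA)).2

lemma lastReq_mem_lastIdx (R : CacheRun S k T σ) (ht : t ≤ T) (hs : s ∈ R.C t) :
    lastReq σ t s ∈ lastIdx R t := by
  have hreq := R.wasRequested_of_mem ht hs
  simp only [lastIdx, Finset.mem_filter, Finset.mem_Icc, hreq.apply_lastReq]
  exact ⟨⟨hreq.one_le_lastReq, lastReq_le σ t s⟩, hs,
    fun j hj => ne_of_lastReq_lt (by omega) hj.2⟩

end CacheRun

/-- The time of the last eviction of the page `s` by the run `R` up to time `t`, or `0` if there is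
none. -/
noncomputable def lastEvict (R : CacheRun S k T σ) (t : ℕ) (s : S) : ℕ :=
  Nat.findGreatest (fun t₀ => EvictStep R t₀ ∧ R.p t₀ = s) t

/-- The label, that is the strategy used, of the last eviction of the page `s` by the run `R` up to
time `t`, with the junk value `strat 0` if there is none. -/
noncomputable def lastLabel (R : CacheRun S k T σ) (strat : ℕ → Fin 3) (t : ℕ) (s : S) : Fin 3 :=
  strat (lastEvict R t s)

lemma exists_evictStep_of_notMem (R : CacheRun S k T σ) (ht : t ≤ T) (h : WasRequested σ t s)
    (hs : s ∉ R.C t) : ∃ t₀ ≤ t, EvictStep R t₀ ∧ R.p t₀ = s := by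
  induction t with
  | zero => exact absurd h fun ⟨i, h1, h0, _⟩ => by omega
  | succ t ih =>
    by_cases hE : EvictStep R (t + 1) ∧ R.p (t + 1) = s
    · exact ⟨t + 1, le_rfl, hE⟩
    have hne : σ (t + 1) ≠ s ∧ s ∉ R.C t := by
      by_cases hR : EvictStep R (t + 1)
      · rw [hR.cache_succ] at hs
        grind
      · rw [R.cache_succ_of_not_evictStep ht hR] at hs
        grind
    obtain ⟨t₀, h0, hE₀⟩ := ih (by omega) (h.of_succ hne.1) hne.2
    exact ⟨t₀, by omega, hE₀⟩

lemma lastEvictedWith_lastLabel (R : CacheRun S k T σ) (strat : ℕ → Fin 3) (ht : t ≤ T)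
    (h : WasRequested σ t (σ (t + 1))) (hs : σ (t + 1) ∉ R.C t) :
    LastEvictedWith R strat (t + 1) (lastLabel R strat t (σ (t + 1))) := by
  obtain ⟨t₀, h0, hE₀⟩ := exists_evictStep_of_notMem R ht h hs
  obtain ⟨hE, hp⟩ := Nat.findGreatest_spec (P := fun t₀ => EvictStep R t₀ ∧ R.p t₀ = σ (t + 1))
    h0 hE₀
  exact ⟨_, Nat.lt_succ_of_le (Nat.findGreatest_le t), hE, hp, rfl,
    fun t₁ h1 h2 => Nat.findGreatest_is_greatest h1 (Nat.le_of_lt_succ h2)⟩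

lemma lastLabel_succ (R : CacheRun S k T σ) (strat : ℕ → Fin 3) (t : ℕ) (s : S) :
    lastLabel R strat (t + 1) s =
      if EvictStep R (t + 1) ∧ R.p (t + 1) = s then strat (t + 1) else lastLabel R strat t s := by
  rw [lastLabel, lastEvict, Nat.findGreatest_succ, apply_ite strat]
  rfl

lemma lastLabel_succ_of_notMem (strat : ℕ → Fin 3) (h : s ∉ R.C t) :
    lastLabel R strat (t + 1) s = lastLabel R strat t s := by
  rw [lastLabel_succ, if_neg]
  rintro ⟨hE, rfl⟩
  exact h hE.p_mem

lemma lastLabel_succ_p (strat : ℕ → Fin 3) (h : EvictStep R (t + 1)) :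
    lastLabel R strat (t + 1) (R.p (t + 1)) = strat (t + 1) := by
  rw [lastLabel_succ, if_pos ⟨h, rfl⟩]

end Runs

/-! ### The potential of an evicted page -/

section Potential

variable {k T N m ν ν' D q q' : ℕ}

/-- The number of blocks of half a cache size by which the next request time `ν` of a page precedes
the deadline `D`, capped at `N`; it is `0` for a page that is not requested again by time `T`. -/
def level (k T N ν D : ℕ) : ℕ :=
  if T < ν then 0 else min (2 * (D - ν) ⌈/⌉ k) N

lemma level_le_cap (k T N ν D : ℕ) : level k T N ν D ≤ N := by
  unfold level
  split_ifs
  exacts [N.zero_le, min_le_right _ _]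

lemma level_antitone (hk : 0 < k) (h : ν ≤ ν') : level k T N ν' D ≤ level k T N ν D := by
  unfold level
  split_ifs with h1 h2
  · exact le_rfl
  · exact Nat.zero_le _
  · omega
  · exact min_le_min_right N ((gc_smul_ceilDiv hk).monotone_l (by omega))

lemma level_le (hk : 0 < k) (h : 2 * D ≤ 2 * ν + k * m) : level k T N ν D ≤ m := by
  unfold level
  split_ifs
  · exact m.zero_le
  · exact (min_le_left _ _).trans ((ceilDiv_le_iff_le_mul hk).2 (by omega))

lemma le_of_level_eq_zero (hk : 0 < k) (hN : 0 < N) (hν : ν ≤ T) (h : level k T N ν D = 0) :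
    D ≤ ν := by
  rw [level, if_neg hν.not_gt, Nat.min_eq_zero_iff, or_iff_left hN.ne', ← Nat.le_zero,
    ceilDiv_le_iff_le_mul hk] at h
  omega

lemma level_lt_of_far (hk : 0 < k) (hpos : 0 < level k T N ν D) (hcap : level k T N ν D < N)
    (hfar : T < ν' ∨ 2 * ν + k ≤ 2 * ν') : level k T N ν' D < level k T N ν D := by
  by_cases hT : T < ν'
  · rwa [level, if_pos hT]
  have hν : ¬ T < ν := fun h => by simp [level, h] at hpos
  have hblocks : 2 * (D - ν) ≤ k * level k T N ν D := by
    rw [← ceilDiv_le_iff_le_mul hk]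
    rw [level, if_neg hν] at hcap ⊢
    omega
  obtain ⟨m, hm⟩ := Nat.exists_eq_add_of_le' hpos
  rw [hm, mul_add] at hblocks
  rw [hm, Nat.lt_succ_iff]
  exact level_le hk (by omega)

/-- The potential of a page that is currently evicted, given the label of its last eviction and its
level `q ≤ N`. Evicting the page that is paired with it in its place changes the label to its
successor and lowers the level; the constants are chosen such that each such step lowers the
potential by at least one, for the random choice on average and for the other two up to an error
of the predictions. -/
def labelPot (N : ℕ) : Fin 3 → ℕ → ℕ
  | 0, q => if q = 0 then 1 else if q = N then 6 * N + 3 else 6 * q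
  | 1, q => if q = 0 then 0 else 6 * q + 2
  | 2, q => if q = 0 then 2 else 6 * q + 1

lemma labelPot_le (l : Fin 3) (h : q ≤ N) : labelPot N l q ≤ 6 * N + 3 := by
  fin_cases l <;> simp only [labelPot] <;> split_ifs <;> omega

lemma labelPot_two_le (h : q' ≤ q) : labelPot N 2 q' + 1 ≤ labelPot N 1 q + 3 := by
  simp only [labelPot]
  split_ifs <;> omega

lemma labelPot_two_lt (h : q' ≤ q) (hq : 0 < q) : labelPot N 2 q' < labelPot N 1 q := by
  simp only [labelPot]
  split_ifs <;> omega

lemma labelPot_zero_le (h : q' ≤ q) : labelPot N 0 q' + 1 ≤ labelPot N 2 q + 3 := by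
  simp only [labelPot]
  split_ifs <;> omega

lemma labelPot_zero_lt (h : q' ≤ q) (hcap : q' < N) : labelPot N 0 q' < labelPot N 2 q := by
  simp only [labelPot]
  split_ifs <;> omega

lemma labelPot_one_lt (h : q' ≤ q) (hq : q = 0 ∨ q = N) : labelPot N 1 q' < labelPot N 0 q := by
  simp only [labelPot]
  split_ifs <;> omega

lemma labelPot_one_le (h : q' ≤ q) : labelPot N 1 q' ≤ labelPot N 0 q + 2 := by
  simp only [labelPot]
  split_ifs <;> omega

lemma labelPot_one_add_four_le (h : q' < q) : labelPot N 1 q' + 4 ≤ labelPot N 0 q := by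
  simp only [labelPot]
  split_ifs <;> omega

section Average

variable {α : Type*} {Q : Finset α} {nu : α → ℕ}

lemma two_mul_card_near_le (hnu : ∀ y ∈ Q, ν < nu y)
    (hinj : ∀ y ∈ Q, ∀ y' ∈ Q, nu y ≤ T → nu y = nu y' → y = y') :
    2 * (Q.filter fun y => ¬ (T < nu y ∨ 2 * ν + k ≤ 2 * nu y)).card ≤ k := by
  have hcard : (Q.filter fun y => ¬ (T < nu y ∨ 2 * ν + k ≤ 2 * nu y)).card ≤
      (Finset.Ioc ν (ν + (k - 1) / 2)).card := by
    refine Finset.card_le_card_of_injOn nu (fun y hy => ?_) fun y hy y' hy' => ?_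
    · obtain ⟨hyQ, hy⟩ := Finset.mem_filter.1 hy
      have := hnu y hyQ
      exact Finset.mem_Ioc.2 (by omega)
    · obtain ⟨hyQ, hy⟩ := Finset.mem_filter.1 hy
      exact hinj y hyQ y' (Finset.mem_filter.1 hy').1 (by omega)
  rw [Nat.card_Ioc] at hcard
  omega

/-
In the levels `1, …, N - 1` a page that is next requested soon may raise the potential by two, but
at least half of the cached pages are next requested at least half a cache size later and lower it
by four.
-/
lemma sum_labelPot_one_add_card_le (hk : 0 < k) (hQ : Q.card = k) (hnu : ∀ y ∈ Q, ν < nu y)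
    (hinj : ∀ y ∈ Q, ∀ y' ∈ Q, nu y ≤ T → nu y = nu y' → y = y') :
    ∑ y ∈ Q, labelPot N 1 (level k T N (nu y) D) + k ≤ k * labelPot N 0 (level k T N ν D) := by
  have hlevel : ∀ y ∈ Q, level k T N (nu y) D ≤ level k T N ν D :=
    fun y hy => level_antitone hk (hnu y hy).le
  by_cases hq : level k T N ν D = 0 ∨ level k T N ν D = N
  · have hsum : ∑ y ∈ Q, (labelPot N 1 (level k T N (nu y) D) + 1) ≤
        Q.card • labelPot N 0 (level k T N ν D) :=
      Finset.sum_le_card_nsmul _ _ _ fun y hy => labelPot_one_lt (hlevel y hy) hq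
    simpa [Finset.sum_add_distrib, hQ] using hsum
  · have hcap := (level_le_cap k T N ν D).lt_of_ne (not_or.1 hq).2
    have hterm : ∀ y ∈ Q, labelPot N 1 (level k T N (nu y) D) + 4 ≤ labelPot N 0 (level k T N ν D) +
        if ¬ (T < nu y ∨ 2 * ν + k ≤ 2 * nu y) then 6 else 0 := by
      intro y hy
      split_ifs with hfar
      · exact labelPot_one_add_four_le
          (level_lt_of_far hk (Nat.pos_of_ne_zero (not_or.1 hq).1) hcap hfar)
      · have := labelPot_one_le (N := N) (hlevel y hy)
        omega
    have hsum := Finset.sum_le_sum hterm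
    simp only [Finset.sum_add_distrib, Finset.sum_const, ← Finset.sum_filter, hQ,
      smul_eq_mul] at hsum
    have := two_mul_card_near_le (k := k) hnu hinj
    omega

end Average

end Potential

/-! ### The amortized analysis of a single run -/

section Amortized

variable {k T g t t' : ℕ} {σ : ℕ → S} {A R : CacheRun S k T σ} {strat : ℕ → Fin 3} {ω : ℕ → ℕ}
  {a b e : S}

/-- The index of the last request of the page that the run `R` evicts at time `t`. -/
def victimIdx (R : CacheRun S k T σ) (t : ℕ) : ℕ :=
  lastReq σ (t - 1) (R.p t)

/-- The eviction at time `t` is of a page whose prediction is off by at least `g * k`. -/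
def IsBadEviction (R : CacheRun S k T σ) (ω : ℕ → ℕ) (g t : ℕ) : Prop :=
  EvictStep R t ∧ g * k ≤ Nat.dist (nextReq σ T (victimIdx R t)) (ω (victimIdx R t))

/-- Whether the run `R` misses at time `t`, as a number. -/
noncomputable def missAt (R : CacheRun S k T σ) (t : ℕ) : ℕ :=
  if σ t ∉ R.C (t - 1) then 1 else 0

lemma sum_missAt (R : CacheRun S k T σ) : ∑ t ∈ Finset.Icc 1 T, missAt R t = misses R :=
  (Finset.card_filter _ _).symm

lemma victimIdx_le (R : CacheRun S k T σ) (t : ℕ) : victimIdx R (t + 1) ≤ t :=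
  lastReq_le _ _ _

namespace EvictStep

lemma wasRequested_p (h : EvictStep R (t + 1)) : WasRequested σ t (R.p (t + 1)) :=
  R.wasRequested_of_mem (Nat.le_of_succ_le h.succ_le) h.p_mem

lemma one_le_victimIdx (h : EvictStep R (t + 1)) : 1 ≤ victimIdx R (t + 1) :=
  h.wasRequested_p.one_le_lastReq

lemma apply_victimIdx (h : EvictStep R (t + 1)) : σ (victimIdx R (t + 1)) = R.p (t + 1) :=
  h.wasRequested_p.apply_lastReq

lemma victimIdx_mem_lastIdx (h : EvictStep R (t + 1)) : victimIdx R (t + 1) ∈ lastIdx R t :=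
  R.lastReq_mem_lastIdx (Nat.le_of_succ_le h.succ_le) h.p_mem

lemma succ_lt_nextReq_victimIdx (h : EvictStep R (t + 1)) :
    t + 1 < nextReq σ T (victimIdx R (t + 1)) :=
  h.wasRequested_p.succ_lt_nextReq_lastReq h.succ_le h.p_ne

lemma victimIdx_ne (h : EvictStep R (t + 1)) (h' : EvictStep R (t' + 1)) (htt : t < t') :
    victimIdx R (t + 1) ≠ victimIdx R (t' + 1) := by
  intro heq
  have hp : R.p (t + 1) = R.p (t' + 1) := by rw [← h.apply_victimIdx, ← h'.apply_victimIdx, heq]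
  refine R.notMem_of_not_requested (t := t + 1) htt (Nat.le_of_succ_le h'.succ_le)
    h.p_notMem_cache_succ (fun j hj hjt' => ?_) (hp ▸ h'.p_mem)
  have hidx : victimIdx R (t' + 1) ≤ t := heq ▸ victimIdx_le R t
  exact hp ▸ ne_of_lastReq_lt (hidx.trans_lt (by omega)) hjt'

end EvictStep

lemma injOn_victimIdx (R : CacheRun S k T σ) : Set.InjOn (victimIdx R) {t | EvictStep R t} := by
  rintro (_ | t) ht (_ | t') ht' heq
  · rfl
  · exact absurd ht.1 (by omega)
  · exact absurd ht'.1 (by omega)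
  · obtain hlt | rfl | hlt := lt_trichotomy t t'
    · exact absurd heq (EvictStep.victimIdx_ne ht ht' hlt)
    · rfl
    · exact absurd heq.symm (EvictStep.victimIdx_ne ht' ht hlt)

lemma card_isBadEviction_mul_le (R : CacheRun S k T σ) (ω : ℕ → ℕ) (g : ℕ) :
    ((Finset.Icc 1 T).filter (IsBadEviction R ω g)).card * (g * k) ≤ totalLoss σ T ω := by
  have hinj : Set.InjOn (victimIdx R) ((Finset.Icc 1 T).filter (IsBadEviction R ω g)) :=
    (injOn_victimIdx R).mono fun t ht => (Finset.mem_filter.1 ht).2.1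
  rw [← smul_eq_mul, ← Finset.card_image_of_injOn hinj]
  refine (Finset.card_nsmul_le_sum _ (fun i => Nat.dist (nextReq σ T i) (ω i)) _ ?_).trans
    (Finset.sum_le_sum_of_subset ?_)
  · exact Finset.forall_mem_image.2 fun t ht => (Finset.mem_filter.1 ht).2.2
  · refine Finset.image_subset_iff.2 fun t ht => ?_
    obtain ⟨ht, hE, -⟩ := Finset.mem_filter.1 ht
    obtain ⟨t, rfl⟩ := Nat.exists_eq_add_of_le' (Finset.mem_Icc.1 ht).1
    have := victimIdx_le R t
    exact Finset.mem_Icc.2 ⟨hE.one_le_victimIdx, by have := hE.succ_le; omega⟩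

/-- The predicted time of the next request of the page `b`, as known at time `t`, plus the tolerated
error `g * k`. -/
def deadline (σ : ℕ → S) (ω : ℕ → ℕ) (k g t : ℕ) (b : S) : ℕ :=
  ω (lastReq σ t b) + g * k

/-- The potential of an evicted page with label `l` and next request time `ν` that is paired with
the cached page `b`. The cap `4 * g + 1` of the levels is the least one that a page evicted by
BlindOracle at a prediction error below `g * k` does not reach. -/
def pagePot (σ : ℕ → S) (ω : ℕ → ℕ) (k T g t : ℕ) (l : Fin 3) (ν : ℕ) (b : S) : ℕ :=
  labelPot (4 * g + 1) l (level k T (4 * g + 1) ν (deadline σ ω k g t b))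

/-- The weight for matching the page `a`, cached by the comparator only, with the page `b`, cached
by `R` only. The first summand bounds the second one, so that the triangle inequality holds. -/
noncomputable def pairWeight (R : CacheRun S k T σ) (strat : ℕ → Fin 3) (ω : ℕ → ℕ) (g t : ℕ)
    (a b : S) : ℕ :=
  (24 * g + 9) + pagePot σ ω k T g t (lastLabel R strat t a) (nextReq σ T (lastReq σ t a)) b

/-- The potential of the amortized analysis of the run `R` against the comparator `A`. -/
noncomputable def potential (A R : CacheRun S k T σ) (strat : ℕ → Fin 3) (ω : ℕ → ℕ)
    (g t : ℕ) : ℕ :=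
  transportCost (pairWeight R strat ω g t) (A.C t) (R.C t)

lemma pairWeight_bounds (R : CacheRun S k T σ) (strat : ℕ → Fin 3) (ω : ℕ → ℕ) (g t : ℕ) (a b : S) :
    24 * g + 9 ≤ pairWeight R strat ω g t a b ∧
      pairWeight R strat ω g t a b ≤ 2 * (24 * g + 9) := by
  have := labelPot_le (lastLabel R strat t a) (level_le_cap k T (4 * g + 1)
    (nextReq σ T (lastReq σ t a)) (deadline σ ω k g t b))
  unfold pairWeight pagePot
  omega

lemma pairWeight_triangle (R : CacheRun S k T σ) (strat : ℕ → Fin 3) (ω : ℕ → ℕ) (g t : ℕ)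
    (a b c : S) : pairWeight R strat ω g t a c ≤
      pairWeight R strat ω g t a b + pairWeight R strat ω g t b c :=
  calc
    _ ≤ 2 * (24 * g + 9) := (pairWeight_bounds R strat ω g t a c).2
    _ = (24 * g + 9) + (24 * g + 9) := two_mul _
    _ ≤ _ := add_le_add (pairWeight_bounds R strat ω g t a b).1
      (pairWeight_bounds R strat ω g t b c).1

lemma pairWeight_succ_of_ne (ha : a ∉ R.C t) (hσa : σ (t + 1) ≠ a) (hσb : σ (t + 1) ≠ b) :
    pairWeight R strat ω g (t + 1) a b = pairWeight R strat ω g t a b := by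
  rw [pairWeight, pairWeight, pagePot, pagePot, deadline, deadline,
    lastLabel_succ_of_notMem strat ha, lastReq_succ_of_ne hσa, lastReq_succ_of_ne hσb]

lemma transportCost_pairWeight_succ (h : σ (t + 1) ∈ A.C t ↔ σ (t + 1) ∈ R.C t) :
    transportCost (pairWeight R strat ω g (t + 1)) (A.C t) (R.C t) = potential A R strat ω g t := by
  refine transportCost_congr fun a ha b hb => ?_
  rw [Finset.mem_sdiff] at ha hb
  exact pairWeight_succ_of_ne ha.2 (by grind) (by grind)

lemma potential_succ_of_mem_of_mem (ht : t + 1 ≤ T) (hA : σ (t + 1) ∈ A.C t)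
    (hR : σ (t + 1) ∈ R.C t) : potential A R strat ω g (t + 1) = potential A R strat ω g t := by
  rw [potential, A.cache_succ_of_mem ht hA, R.cache_succ_of_mem ht hR,
    transportCost_pairWeight_succ (iff_of_true hA hR)]

lemma potential_succ_le_of_evictStep (hA : EvictStep A (t + 1)) :
    potential A R strat ω g (t + 1) ≤ potential A R strat ω g t + 3 * (24 * g + 9) := by
  have ht := hA.succ_le
  have hcard := A.card_cache_eq_card_cache R (Nat.le_of_succ_le ht)
  have hw' := pairWeight_bounds R strat ω g (t + 1)
  rw [potential, hA.cache_succ]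
  by_cases hR : σ (t + 1) ∈ R.C t
  · rw [R.cache_succ_of_mem ht hR]
    have hleft := transportCost_insert_erase_left_le (w' := pairWeight R strat ω g (t + 1))
      (fun a b => (pairWeight_bounds R strat ω g t a b).1) hw' hcard
      (Finset.mem_sdiff.2 ⟨hR, hA.notMem⟩) hA.p_mem
      (fun a ha b _ hb => pairWeight_succ_of_ne (Finset.mem_sdiff.1 ha).2 (by grind) hb.symm)
    exact hleft.trans (Nat.add_le_add_left (by omega) _)
  · have hE : EvictStep R (t + 1) := ⟨hA.1, ht, hR, hcard ▸ hA.card_eq⟩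
    have hinsert := transportCost_insert_erase_le (pairWeight_triangle R strat ω g (t + 1))
      hcard hA.notMem hR hE.p_mem
    rw [transportCost_pairWeight_succ (iff_of_false hA.notMem hR)] at hinsert
    have hcard' : (A.C t).card = (insert (σ (t + 1)) ((R.C t).erase (R.p (t + 1)))).card := by
      rw [← hE.cache_succ, R.card_cache_succ ht hE.card_eq, hA.card_eq]
    have hleft := transportCost_insert_erase_left_le (fun a b => (hw' a b).1) hw' hcard'
      (Finset.mem_sdiff.2 ⟨Finset.mem_insert_self _ _, hA.notMem⟩) hA.p_mem
      (fun _ _ _ _ _ => rfl)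
    have hnew := (hw' (R.p (t + 1)) (σ (t + 1))).2
    rw [hE.cache_succ]
    omega

lemma potential_succ_le_of_notMem (ht : t + 1 ≤ T) (hA : σ (t + 1) ∉ A.C t) :
    potential A R strat ω g (t + 1) ≤ potential A R strat ω g t + 3 * (24 * g + 9) := by
  by_cases hcard : (A.C t).card = k
  · exact potential_succ_le_of_evictStep ⟨Nat.le_add_left 1 t, ht, hA, hcard⟩
  · have heq := (A.cache_eq_or_card_eq R (Nat.le_of_succ_le ht)).resolve_right fun h => hcard h.1
    rw [potential, A.cache_succ_eq_of_card_ne R ht heq hcard, transportCost_self]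
    exact Nat.zero_le _

/-
The partner `e` of the requested page is chosen before the eviction, so that it is common to all
runs that have behaved like `R` up to time `t`. The evicted page takes over `e` as its partner.
-/
lemma exists_potential_succ_le (ht : t + 1 ≤ T) (hA : σ (t + 1) ∈ A.C t)
    (hR : σ (t + 1) ∉ R.C t) :
    ∃ e ∈ R.C t, ∀ (R' : CacheRun S k T σ) (strat' : ℕ → Fin 3), R'.C t = R.C t →
      lastLabel R' strat' t = lastLabel R strat t →
      potential A R' strat' ω g (t + 1) +
          pagePot σ ω k T g t (lastLabel R strat t (σ (t + 1))) (t + 1) e ≤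
        potential A R strat ω g t +
          pagePot σ ω k T g t (strat' (t + 1)) (nextReq σ T (victimIdx R' (t + 1))) e := by
  have htT := Nat.le_of_succ_le ht
  obtain ⟨e, he, hpartner⟩ := exists_partner (pairWeight R strat ω g t)
    (A.card_cache_eq_card_cache R htT) (Finset.mem_sdiff.2 ⟨hA, hR⟩)
  obtain ⟨heR, heA⟩ := Finset.mem_sdiff.1 he
  refine ⟨e, heR, fun R' strat' hC hlabel => ?_⟩
  have hE := A.evictStep_of_mem_of_notMem R' ht hA (hC ▸ hR)
  have hagree : ∀ a ∈ A.C t \ R.C t, a ≠ σ (t + 1) → ∀ b ∈ R.C t \ A.C t,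
      pairWeight R' strat' ω g (t + 1) a b = pairWeight R strat ω g t a b := by
    intro a ha hax b hb
    rw [pairWeight_succ_of_ne (hC ▸ (Finset.mem_sdiff.1 ha).2) hax.symm
      (ne_of_mem_of_not_mem hA (Finset.mem_sdiff.1 hb).2), pairWeight, pairWeight, hlabel]
  have hcost := hpartner _ (pairWeight_triangle R' strat' ω g (t + 1)) hagree _ (hC ▸ hE.p_mem)
  rw [← hC, ← hE.cache_succ, hC] at hcost
  have hrequested : pairWeight R strat ω g t (σ (t + 1)) e =
      (24 * g + 9) + pagePot σ ω k T g t (lastLabel R strat t (σ (t + 1))) (t + 1) e := by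
    rw [pairWeight, (A.wasRequested_of_mem htT hA).nextReq_lastReq_eq ht rfl]
  have hvictim : pairWeight R' strat' ω g (t + 1) (R'.p (t + 1)) e = (24 * g + 9) +
      pagePot σ ω k T g t (strat' (t + 1)) (nextReq σ T (victimIdx R' (t + 1))) e := by
    rw [pairWeight, lastLabel_succ_p strat' hE, lastReq_succ_of_ne hE.p_ne, pagePot, deadline,
      lastReq_succ_of_ne (ne_of_mem_of_not_mem hA heA)]
    rfl
  rw [potential, potential, A.cache_succ_of_mem ht hA]
  omega

lemma pagePot_victim_lt_of_corrector (hk : 0 < k) (hg : 0 < g) (hE : EvictStep R (t + 1))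
    (hc : CorrectorChoiceAt R ω (t + 1)) (he : e ∈ R.C t) :
    pagePot σ ω k T g t 2 (nextReq σ T (victimIdx R (t + 1))) e + 1 ≤
      pagePot σ ω k T g t 1 (t + 1) e + if IsBadEviction R ω g (t + 1) then 3 else 0 := by
  have hlevel := level_antitone (T := T) (N := 4 * g + 1) (D := deadline σ ω k g t e) hk
    hE.succ_lt_nextReq_victimIdx.le
  obtain hzero | hpos := Nat.eq_zero_or_pos
    (level k T (4 * g + 1) (t + 1) (deadline σ ω k g t e))
  · have hD := le_of_level_eq_zero hk (Nat.succ_pos _) hE.succ_le hzero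
    have hgk := Nat.mul_pos hg hk
    have heidx := R.lastReq_mem_lastIdx (Nat.le_of_succ_le hE.succ_le) he
    have hlt : ω (lastReq σ t e) < t + 1 := by unfold deadline at hD; omega
    obtain ⟨-, hmin⟩ := hc.1 ⟨_, heidx, hlt⟩ _ hE.victimIdx_mem_lastIdx hE.apply_victimIdx.symm
    have hbad : IsBadEviction R ω g (t + 1) := by
      refine ⟨hE, ?_⟩
      have := hmin _ heidx hlt
      have := hE.succ_lt_nextReq_victimIdx
      unfold deadline at hD
      unfold Nat.dist
      omega
    rw [if_pos hbad]
    exact labelPot_two_le hlevel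
  · exact (labelPot_two_lt hlevel hpos).trans_le (Nat.le_add_right _ _)

lemma pagePot_victim_lt_of_blind (hk : 0 < k) (hE : EvictStep R (t + 1))
    (hb : BlindChoiceAt R ω (t + 1)) (he : e ∈ R.C t) :
    pagePot σ ω k T g t 0 (nextReq σ T (victimIdx R (t + 1))) e + 1 ≤
      pagePot σ ω k T g t 2 (t + 1) e + if IsBadEviction R ω g (t + 1) then 3 else 0 := by
  have hlevel := level_antitone (T := T) (N := 4 * g + 1) (D := deadline σ ω k g t e) hk
    hE.succ_lt_nextReq_victimIdx.le
  by_cases hbad : IsBadEviction R ω g (t + 1)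
  · rw [if_pos hbad]
    exact labelPot_zero_le hlevel
  · rw [if_neg hbad]
    have hmax : ω (lastReq σ t e) ≤ ω (victimIdx R (t + 1)) :=
      hb _ hE.victimIdx_mem_lastIdx hE.apply_victimIdx.symm _
        (R.lastReq_mem_lastIdx (Nat.le_of_succ_le hE.succ_le) he)
    have herr := not_le.1 fun h => hbad ⟨hE, h⟩
    refine labelPot_zero_lt hlevel (Nat.lt_succ_of_le (level_le hk ?_))
    have hcap : k * (4 * g) = 4 * (g * k) := by ring
    unfold Nat.dist at herr
    unfold deadline
    omega

/-- The amount by which the potential and the number of misses of `R` together may grow at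
time `t`. -/
noncomputable def charge (A R : CacheRun S k T σ) (ω : ℕ → ℕ) (g t : ℕ) : ℕ :=
  (72 * g + 28) * missAt A t + if IsBadEviction R ω g t then 3 else 0

lemma potential_succ_add_missAt_le (hk : 0 < k) (hg : 0 < g) (hR : IsAlternatingOracle R ω strat)
    (ht : t + 1 ≤ T)
    (hrandom : ¬ (σ (t + 1) ∈ A.C t ∧ σ (t + 1) ∉ R.C t ∧ lastLabel R strat t (σ (t + 1)) = 0)) :
    potential A R strat ω g (t + 1) + missAt R (t + 1) ≤
      potential A R strat ω g t + charge A R ω g (t + 1) := by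
  by_cases hA : σ (t + 1) ∈ A.C t
  · by_cases hmem : σ (t + 1) ∈ R.C t
    · simp [missAt, hmem, potential_succ_of_mem_of_mem ht hA hmem]
    · have hE := A.evictStep_of_mem_of_notMem R ht hA hmem
      have hlast := lastEvictedWith_lastLabel R strat (Nat.le_of_succ_le ht)
        (A.wasRequested_of_mem (Nat.le_of_succ_le ht) hA) hmem
      obtain ⟨e, he, hpot⟩ := exists_potential_succ_le (strat := strat) (ω := ω) (g := g) ht hA hmem
      have hpot := hpot R strat rfl rfl
      have hdrop : pagePot σ ω k T g t (strat (t + 1)) (nextReq σ T (victimIdx R (t + 1))) e + 1 ≤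
          pagePot σ ω k T g t (lastLabel R strat t (σ (t + 1))) (t + 1) e +
            if IsBadEviction R ω g (t + 1) then 3 else 0 := by
        obtain ⟨-, -, hcorrector, hblind⟩ := hR (t + 1) hE
        obtain h | h | h : lastLabel R strat t (σ (t + 1)) = 0 ∨
            lastLabel R strat t (σ (t + 1)) = 1 ∨ lastLabel R strat t (σ (t + 1)) = 2 := by omega
        · exact absurd ⟨hA, hmem, h⟩ hrandom
        · obtain ⟨hs, hc⟩ := hcorrector (h ▸ hlast)
          rw [h, hs]
          exact pagePot_victim_lt_of_corrector hk hg hE hc he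
        · obtain ⟨hs, hb⟩ := hblind (h ▸ hlast)
          rw [h, hs]
          exact pagePot_victim_lt_of_blind hk hE hb he
      simp only [missAt, charge, Nat.add_sub_cancel, hA, hmem, not_true, not_false_eq_true, if_true,
        if_false]
      omega
  · have hpot := potential_succ_le_of_notMem (R := R) (strat := strat) (ω := ω) (g := g) ht hA
    have hmiss : missAt R (t + 1) ≤ 1 := by unfold missAt; split_ifs <;> omega
    have hA' : missAt A (t + 1) = 1 := if_pos hA
    rw [charge, hA', mul_one]
    omega

end Amortized

/-! ### Averaging over the random choices -/

section Average

lemma sum_sum_update {ι κ M : Type*} [Fintype ι] [DecidableEq ι] [Fintype κ] [AddCommMonoid M]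
    (τ : ι) (G : (ι → κ) → M) :
    ∑ u, ∑ v, G (Function.update u τ v) = Fintype.card κ • ∑ u, G u := by
  let swap (q : (ι → κ) × κ) : (ι → κ) × κ := (Function.update q.1 τ q.2, q.1 τ)
  have hswap : Function.Involutive swap := fun q => by simp [swap]
  calc ∑ u, ∑ v, G (Function.update u τ v)
    _ = ∑ q, G (swap q).1 := by rw [Fintype.sum_prod_type]
    _ = ∑ q : (ι → κ) × κ, G q.1 := Equiv.sum_comp hswap.toPerm fun q => G q.1
    _ = Fintype.card κ • ∑ u, G u := by
      simp only [Fintype.sum_prod_type, Finset.sum_const, Finset.card_univ, Finset.smul_sum]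

variable {k T g t : ℕ} {σ : ℕ → S} {A R₀ : CacheRun S k T σ} {strat₀ : ℕ → Fin 3} {ω : ℕ → ℕ}

lemma lastIdx_congr {R R' : CacheRun S k T σ} (h : R.C t = R'.C t) :
    lastIdx R t = lastIdx R' t := by
  rw [lastIdx, lastIdx, h]

lemma IsAlternatingOracleSeeded.card_filter_lt_victimIdx {R : CacheRun S k T σ}
    {strat : ℕ → Fin 3} {u : Fin (T + 1) → Fin k} {τ : Fin (T + 1)}
    (h : IsAlternatingOracleSeeded R ω strat u) (hτ : (τ : ℕ) = t + 1) (hE : EvictStep R (t + 1))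
    (hs : strat (t + 1) = 1) :
    ((lastIdx R t).filter (· < victimIdx R (t + 1))).card = u τ := by
  obtain rfl : τ = ⟨t + 1, Nat.lt_succ_of_le hE.succ_le⟩ := Fin.ext hτ
  exact h.2 (t + 1) hE hs _ hE.victimIdx_mem_lastIdx hE.apply_victimIdx.symm

section RandomStep

variable {R : Fin k → CacheRun S k T σ} {strat : Fin k → ℕ → Fin 3}

lemma injective_p_succ {seed : Fin k → Fin (T + 1) → Fin k} {τ : Fin (T + 1)}
    (hR : ∀ v, IsAlternatingOracleSeeded (R v) ω (strat v) (seed v)) (hτ : (τ : ℕ) = t + 1)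
    (hseed : ∀ v, seed v τ = v) (hC : ∀ v, (R v).C t = R₀.C t)
    (hE : ∀ v, EvictStep (R v) (t + 1)) (hstrat : ∀ v, strat v (t + 1) = 1) :
    Function.Injective fun v => (R v).p (t + 1) := by
  intro v v' hp
  have hvictim : victimIdx (R v) (t + 1) = victimIdx (R v') (t + 1) := congrArg (lastReq σ t) hp
  have hrank v := (hR v).card_filter_lt_victimIdx hτ (hE v) (hstrat v)
  simp only [lastIdx_congr (hC _), hseed] at hrank
  exact Fin.ext (by rw [← hrank v, ← hrank v', hvictim])

lemma image_p_succ_eq (hC : ∀ v, (R v).C t = R₀.C t) (hE : ∀ v, EvictStep (R v) (t + 1))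
    (hp : Function.Injective fun v => (R v).p (t + 1)) :
    Finset.univ.image (fun v => (R v).p (t + 1)) = R₀.C t := by
  refine Finset.eq_of_subset_of_card_le
    (Finset.image_subset_iff.2 fun v _ => hC v ▸ (hE v).p_mem) ?_
  rw [Finset.card_image_of_injective _ hp, Finset.card_fin]
  exact R₀.card_le t

lemma sum_potential_succ_add_le (ht : t + 1 ≤ T) (hk : 0 < k) (hA : σ (t + 1) ∈ A.C t)
    (hR₀ : σ (t + 1) ∉ R₀.C t) (hlabel₀ : lastLabel R₀ strat₀ t (σ (t + 1)) = 0)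
    (hC : ∀ v, (R v).C t = R₀.C t)
    (hlabel : ∀ v, lastLabel (R v) (strat v) t = lastLabel R₀ strat₀ t)
    (hstrat : ∀ v, strat v (t + 1) = 1) (hp : Function.Injective fun v => (R v).p (t + 1)) :
    ∑ v, potential A (R v) (strat v) ω g (t + 1) + k ≤ k * potential A R₀ strat₀ ω g t := by
  have hE v := A.evictStep_of_mem_of_notMem (R v) ht hA (hC v ▸ hR₀)
  have hreq {s : S} (hs : s ∈ R₀.C t) := R₀.wasRequested_of_mem (Nat.le_of_succ_le ht) hs
  obtain ⟨e, -, hpot⟩ := exists_potential_succ_le (strat := strat₀) (ω := ω) (g := g) ht hA hR₀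
  have hsum := Finset.sum_le_sum fun v (_ : v ∈ Finset.univ) => hpot _ _ (hC v) (hlabel v)
  have hrandom := sum_labelPot_one_add_card_le (T := T) (N := 4 * g + 1) (ν := t + 1)
    (D := deadline σ ω k g t e) (nu := fun s => nextReq σ T (lastReq σ t s)) hk
    (A.evictStep_of_mem_of_notMem R₀ ht hA hR₀).card_eq
    (fun s hs => (hreq hs).succ_lt_nextReq_lastReq ht (ne_of_mem_of_not_mem hs hR₀).symm)
    (fun s hs s' hs' hT heq => (hreq hs).eq_of_nextReq_lastReq_eq (hreq hs') hT heq)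
  rw [← image_p_succ_eq hC hE hp, Finset.sum_image hp.injOn] at hrandom
  simp only [Finset.sum_add_distrib, Finset.sum_const, Finset.card_univ, Fintype.card_fin,
    smul_eq_mul, hlabel₀, hstrat] at hsum
  simp only [pagePot, victimIdx, Nat.add_sub_cancel] at hsum
  omega

end RandomStep

variable {R : (Fin (T + 1) → Fin k) → CacheRun S k T σ}
  {strat : (Fin (T + 1) → Fin k) → ℕ → Fin 3} {u u' : Fin (T + 1) → Fin k}

lemma potential_congr {R R' : CacheRun S k T σ} {strat strat' : ℕ → Fin 3} (hC : R.C t = R'.C t)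
    (hlabel : lastLabel R strat t = lastLabel R' strat' t) :
    potential A R strat ω g t = potential A R' strat' ω g t := by
  unfold potential pairWeight
  rw [hC, hlabel]

lemma Adapted.lastLabel_eq (h : Adapted R strat) (huu : ∀ s : Fin (T + 1), s ≤ t → u s = u' s) :
    lastLabel (R u) (strat u) t = lastLabel (R u') (strat u') t := by
  induction t with
  | zero => exact funext fun _ => (h u u' 0 huu).2.2
  | succ t ih =>
    have huut : ∀ s : Fin (T + 1), s ≤ t → u s = u' s := fun s hs => huu s (Nat.le_succ_of_le hs)
    obtain ⟨-, hp, hstrat⟩ := h u u' (t + 1) huu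
    have hC : (R u).C (t + 1 - 1) = (R u').C (t + 1 - 1) := (h u u' t huut).1
    funext s
    rw [lastLabel_succ, lastLabel_succ, EvictStep, EvictStep, hC, hp, hstrat, ih huut]

lemma sum_update_potential_succ_add_missAt_le (hk : 0 < k) (hg : 0 < g)
    (hR : ∀ u, IsAlternatingOracleSeeded (R u) ω (strat u) u) (hadapted : Adapted R strat)
    {τ : Fin (T + 1)} (hτ : (τ : ℕ) = t + 1) (u : Fin (T + 1) → Fin k) :
    ∑ v, (potential A (R (Function.update u τ v)) (strat (Function.update u τ v)) ω g (t + 1) +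
        missAt (R (Function.update u τ v)) (t + 1)) ≤
      ∑ v, (potential A (R (Function.update u τ v)) (strat (Function.update u τ v)) ω g t +
        charge A (R (Function.update u τ v)) ω g (t + 1)) := by
  have ht : t + 1 ≤ T := hτ ▸ Nat.le_of_lt_succ τ.2
  have hagree v : ∀ s : Fin (T + 1), s ≤ t → Function.update u τ v s = u s :=
    fun s hs => Function.update_of_ne (by rintro rfl; omega) _ _
  have hC v := (hadapted _ _ t (hagree v)).1
  have hlabel v := hadapted.lastLabel_eq (hagree v)
  by_cases hrandom : σ (t + 1) ∈ A.C t ∧ σ (t + 1) ∉ (R u).C t ∧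
      lastLabel (R u) (strat u) t (σ (t + 1)) = 0
  · obtain ⟨hA, hRu, hlabel₀⟩ := hrandom
    have hE v := A.evictStep_of_mem_of_notMem _ ht hA ((hC v).symm ▸ hRu)
    have hstrat v : strat (Function.update u τ v) (t + 1) = 1 := by
      refine ((hR _).1 (t + 1) (hE v)).2.1 ?_
      rw [← hlabel₀, ← hlabel v]
      exact lastEvictedWith_lastLabel _ _ (Nat.le_of_succ_le ht)
        (A.wasRequested_of_mem (Nat.le_of_succ_le ht) hA) (hE v).notMem
    have hp := injective_p_succ (fun v => hR _) hτ (fun v => Function.update_self _ _ _) hC hE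
      hstrat
    have hsum := sum_potential_succ_add_le (ω := ω) (g := g) ht hk hA hRu hlabel₀ hC hlabel hstrat
      hp
    have hmiss v : missAt (R (Function.update u τ v)) (t + 1) = 1 := if_pos (hE v).notMem
    simp only [hmiss, Finset.sum_add_distrib, potential_congr (hC _) (hlabel _), Finset.sum_const,
      Finset.card_fin, smul_eq_mul, mul_one]
    exact hsum.trans (Nat.le_add_right _ _)
  · exact Finset.sum_le_sum fun v _ => potential_succ_add_missAt_le hk hg (hR _).1 ht
      (by rwa [hC, hlabel])

lemma sum_potential_add_missAt_le (hk : 0 < k) (hg : 0 < g)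
    (hR : ∀ u, IsAlternatingOracleSeeded (R u) ω (strat u) u) (hadapted : Adapted R strat)
    (ht : t ≤ T) :
    ∑ u, (potential A (R u) (strat u) ω g t + ∑ s ∈ Finset.Icc 1 t, missAt (R u) s) ≤
      ∑ u, ∑ s ∈ Finset.Icc 1 t, charge A (R u) ω g s := by
  induction t with
  | zero => simp [potential, A.init, CacheRun.init]
  | succ t ih =>
    have hstep := Finset.sum_le_sum fun u (_ : u ∈ Finset.univ) =>
      sum_update_potential_succ_add_missAt_le (A := A) hk hg hR hadapted
        (τ := ⟨t + 1, Nat.lt_succ_of_le ht⟩) rfl u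
    rw [sum_sum_update _ fun u => potential A (R u) (strat u) ω g (t + 1) + missAt (R u) (t + 1),
      sum_sum_update _ fun u => potential A (R u) (strat u) ω g t + charge A (R u) ω g (t + 1),
      Fintype.card_fin] at hstep
    have hstep := Nat.le_of_mul_le_mul_left hstep hk
    have ih := ih (Nat.le_of_succ_le ht)
    simp only [Finset.sum_Icc_succ_top (Nat.le_add_left 1 t), Finset.sum_add_distrib] at ih hstep ⊢
    omega

end Average

section Bound

variable {k T g : ℕ} {σ : ℕ → S} {A : CacheRun S k T σ} {ω : ℕ → ℕ}

lemma sum_charge (A R : CacheRun S k T σ) (ω : ℕ → ℕ) (g : ℕ) :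
    ∑ t ∈ Finset.Icc 1 T, charge A R ω g t =
      (72 * g + 28) * misses A + 3 * ((Finset.Icc 1 T).filter (IsBadEviction R ω g)).card := by
  simp only [charge, Finset.sum_add_distrib, ← Finset.mul_sum, sum_missAt, ← Finset.sum_filter,
    Finset.sum_const, smul_eq_mul]
  rw [mul_comm 3]

lemma sum_charge_le (A R : CacheRun S k T σ) (ω : ℕ → ℕ) (hk : 0 < k) (hg : 0 < g) :
    ((∑ t ∈ Finset.Icc 1 T, charge A R ω g t : ℕ) : ℝ) ≤
      (72 * g + 28) * misses A + 3 * (totalLoss σ T ω / (g * k)) := by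
  have hbad : (((Finset.Icc 1 T).filter (IsBadEviction R ω g)).card : ℝ) ≤
      totalLoss σ T ω / (g * k) := by
    rw [le_div_iff₀ (by positivity)]
    exact_mod_cast card_isBadEviction_mul_le R ω g
  rw [sum_charge]
  push_cast
  gcongr

lemma mean_misses_le (hk : 0 < k) (hg : 0 < g) {R : (Fin (T + 1) → Fin k) → CacheRun S k T σ}
    {strat : (Fin (T + 1) → Fin k) → ℕ → Fin 3}
    (hR : ∀ u, IsAlternatingOracleSeeded (R u) ω (strat u) u) (hadapted : Adapted R strat) :
    (∑ u, (misses (R u) : ℝ)) / (k : ℝ) ^ (T + 1) ≤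
      (72 * g + 28) * misses A + 3 * (totalLoss σ T ω / (g * k)) := by
  have hcharge : ∑ u, misses (R u) ≤ ∑ u, ∑ t ∈ Finset.Icc 1 T, charge A (R u) ω g t := by
    refine le_trans (Finset.sum_le_sum fun u _ => ?_)
      (sum_potential_add_missAt_le hk hg hR hadapted le_rfl)
    rw [sum_missAt]
    exact Nat.le_add_left _ _
  rw [div_le_iff₀ (by positivity), mul_comm]
  calc ∑ u, (misses (R u) : ℝ)
    _ ≤ ∑ u, ((∑ t ∈ Finset.Icc 1 T, charge A (R u) ω g t : ℕ) : ℝ) := mod_cast hcharge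
    _ ≤ ∑ _u : Fin (T + 1) → Fin k,
        ((72 * g + 28) * misses A + 3 * (totalLoss σ T ω / (g * k)) : ℝ) :=
      Finset.sum_le_sum fun u _ => sum_charge_le A (R u) ω hk hg
    _ = _ := by simp [mul_add]

lemma misses_pos (A : CacheRun S k T σ) (hT : 0 < T) : 0 < misses A :=
  Finset.card_pos.2 ⟨1, by simp [A.init, Nat.one_le_iff_ne_zero, hT.ne']⟩

lemma exists_threshold {M η κ : ℝ} (hM : 0 < M) (hη : 0 ≤ η) (hκ : 0 < κ) :
    ∃ g : ℕ, 0 < g ∧ g * M ≤ √(η * M / κ) + M ∧ η / (g * κ) ≤ √(η * M / κ) := by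
  have hsq : √(η * M / κ) ^ 2 = η * M / κ := Real.sq_sqrt (by positivity)
  have hr : 0 ≤ √(η * M / κ) := Real.sqrt_nonneg _
  generalize √(η * M / κ) = r at hsq hr ⊢
  refine ⟨⌊r / M⌋₊ + 1, Nat.succ_pos _, ?_, ?_⟩
  · have hfloor := (le_div_iff₀ hM).1 (Nat.floor_le (div_nonneg hr hM.le))
    push_cast
    linarith
  · have hlt := ((div_lt_iff₀ hM).1 (Nat.lt_floor_add_one (r / M))).le
    push_cast
    rw [div_le_iff₀ (by positivity)]
    rw [eq_div_iff hκ.ne'] at hsq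
    refine le_of_mul_le_mul_right ?_ hM
    calc η * M = r * r * κ := by rw [← hsq, sq]
      _ ≤ r * ((⌊r / M⌋₊ + 1) * M) * κ := by gcongr
      _ = _ := by ring

end Bound

theorem stmt16_general (k T : ℕ) (σ : ℕ → S) (ω : ℕ → ℕ) (A : CacheRun S k T σ) (hk : 0 < k)
    (R : (Fin (T + 1) → Fin k) → CacheRun S k T σ)
    (strat : (Fin (T + 1) → Fin k) → ℕ → Fin 3)
    (hR : ∀ u, IsAlternatingOracleSeeded (R u) ω (strat u) u) (hadapted : Adapted R strat) :
    (∑ u : Fin (T + 1) → Fin k, (misses (R u) : ℝ)) / (k : ℝ) ^ (T + 1) ≤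
      100 * (misses A + √(totalLoss σ T ω * misses A / k)) := by
  obtain rfl | hT := T.eq_zero_or_pos
  · simp [misses]
  · obtain ⟨g, hg, hgM, hgη⟩ := exists_threshold (M := misses A) (η := totalLoss σ T ω) (κ := k)
      (mod_cast misses_pos A hT) (Nat.cast_nonneg _) (mod_cast hk)
    have hr : 0 ≤ √(totalLoss σ T ω * misses A / k : ℝ) := Real.sqrt_nonneg _
    calc _ ≤ (72 * g + 28) * misses A + 3 * (totalLoss σ T ω / (g * k) : ℝ) :=
          mean_misses_le hk hg hR hadapted
      _ ≤ _ := by linarith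

/-- There are absolute constants `C` and `c` such that for every
caching instance with `k ≥ 10`, the AlternatingOracle strategy (driven by uniform i.i.d.
seeds) satisfies `E[OBJ_B] ≤ C·(OPT + √(η·OPT/k)) + c`; in particular it is
`O(√((1/k)·(η/OPT)))`-competitive. -/
theorem stmt16 :
    ∃ C c : ℝ, ∀ (S : Type) [DecidableEq S] (k T : ℕ) (σ : ℕ → S) (ω : ℕ → ℕ)
      (A : CacheRun S k T σ), 10 ≤ k → IsBelady A →
      ∀ (R : (Fin (T + 1) → Fin k) → CacheRun S k T σ)
        (strat : (Fin (T + 1) → Fin k) → ℕ → Fin 3),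
        (∀ u, IsAlternatingOracleSeeded (R u) ω (strat u) u) →
        Adapted R strat →
        (∑ u : Fin (T + 1) → Fin k, (misses (R u) : ℝ)) / (k : ℝ) ^ (T + 1) ≤
          C * (misses A + Real.sqrt (totalLoss σ T ω * misses A / k)) + c :=
  ⟨100, 0, fun _ _ k T σ ω A hk _ R strat hR hadapted => by
    simpa using stmt16_general k T σ ω A (by omega) R strat hR hadapted⟩

end Caching
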